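/- Well-posedness of the matrix Riccati ODE for Λ given K (Step 6(ii)): Let T > 0, ρ ≥ 0, δ > 0, and let K : [0,T] → S^d be continuous, bounded, with positive semidefinite values. Let Q̂ : [0,T] → S^d, b̂ₓ, σ̂ₓ : [0,T] → ℝ^{d×d}, b̂₁, σ̂₁ : [0,T] → ℝ^{d×d₁}, Î : [0,T] → ℝ^{d₁×d}, N̂ : [0,T] → S^{d₁} be continuous and bounded with, for every t ∈ [0,T]: Q̂_t positive semidefinite, N̂_t ⪰ δ I_{d₁}, and Q̂_t − Î_tᵀ N̂_t⁻¹ Î_t positive semidefinite. Let P̂ be a symmetric positive semidefinite d × d matrix. Then there exists a unique bounded continuously differentiable map Λ : [0,T] → S^d, taking positive semidefinite values, such that Λ_T = P̂ and for every t ∈ [0,T]: Λ′_t + Q̂_t + σ̂ₓ,ᵗᵀ K_t σ̂ₓ,ᵗ + Λ_t b̂ₓ,ᵗ + b̂ₓ,ᵗᵀ Λ_t − ρ Λ_t − (Î_t + σ̂₁,ᵗᵀ K_t σ̂ₓ,ᵗ + b̂₁,ᵗᵀ Λ_t)ᵀ (N̂_t + σ̂₁,ᵗᵀ K_t σ̂₁,ᵗ)⁻¹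 (Î_t + σ̂₁,ᵗᵀ K_t σ̂ₓ,ᵗ + b̂₁,ᵗᵀ Λ_t) = 0. -/

import Mathlib

open Matrix Set

attribute [local instance] Matrix.normedAddCommGroup Matrix.normedSpace

/-!
Completing the square for the Hermitian unknown turns the equation into
`-X' = H + X A + Aᴴ X - X R X`. Here `H` is the Schur complement of the control block in the sum of
the positive semidefinite block matrices built from `(N, S, Q)` and from `K`, so `H ⪰ 0`, and
`R ⪰ 0`. By Radon's linearization, `X = V U⁻¹` solves this equation whenever `U' = A U - R V`,
`V' = -H U - Aᴴ V` and `U` is invertible. For the solution with `U = 1`, `V = P` at the terminal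
time, `(Uᴴ V)' = -(Vᴴ R V + Uᴴ H U) ⪯ 0`, hence `Uᴴ V ⪰ 0`. If `U x` vanished at a time `s`, then
`Uᴴ V x`, and with it `R V x`, would vanish on `[s, b]`, so `U x` would solve the linear equation
`y' = A y` with `y s = 0` and would be zero at the terminal time, where `U = 1`. Thus `U` is
invertible and `X = U⁻ᴴ (Uᴴ V) U⁻¹ ⪰ 0`. Uniqueness holds because the difference of two solutions
solves a homogeneous linear equation.
-/

section LinearODE

variable {E F : Type*} [NormedAddCommGroup E] [NormedSpace ℝ E]
  [NormedAddCommGroup F] [NormedSpace ℝ F] {a b : ℝ}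

theorem hasDerivWithinAt_comp_neg {y : ℝ → E} {y' : E} {t : ℝ}
    (hy : HasDerivWithinAt y y' (Icc a b) (-t)) :
    HasDerivWithinAt (fun s => y (-s)) (-y') (Icc (-b) (-a)) t := by
  have hmaps : MapsTo (fun s : ℝ => -s) (Icc (-b) (-a)) (Icc a b) := fun s hs =>
    ⟨by linarith [hs.2], by linarith [hs.1]⟩
  simpa [Function.comp_def] using hy.scomp t (hasDerivWithinAt_neg t _) hmaps

theorem norm_le_norm_mul_exp_of_norm_deriv_le_of_le {y y' : ℝ → E} {C : ℝ}
    (hy : ∀ t ∈ Icc a b, HasDerivWithinAt y (y' t) (Icc a b) t)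
    (hC : ∀ t ∈ Icc a b, ‖y' t‖ ≤ C * ‖y t‖) {s t : ℝ} (hs : s ∈ Icc a b) (ht : t ∈ Icc a b)
    (hst : s ≤ t) : ‖y t‖ ≤ ‖y s‖ * Real.exp (C * (t - s)) := by
  have hsub : Icc s b ⊆ Icc a b := Icc_subset_Icc_left hs.1
  have hderiv : ∀ x ∈ Ico s b, HasDerivWithinAt y (y' x) (Ici x) x := fun x hx =>
    ((hy x (hsub (Ico_subset_Icc_self hx))).mono hsub).mono_of_mem_nhdsWithin
      (Icc_mem_nhdsGE_of_mem hx)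
  rw [← gronwallBound_ε0]
  exact norm_le_gronwallBound_of_norm_deriv_right_le
    (fun x hx => ((hy x (hsub hx)).mono hsub).continuousWithinAt) hderiv le_rfl
    (fun x hx => by simpa using hC x (hsub (Ico_subset_Icc_self hx))) t ⟨hst, ht.2⟩

theorem norm_le_norm_mul_exp_of_norm_deriv_le {y y' : ℝ → E} {C : ℝ}
    (hy : ∀ t ∈ Icc a b, HasDerivWithinAt y (y' t) (Icc a b) t)
    (hC : ∀ t ∈ Icc a b, ‖y' t‖ ≤ C * ‖y t‖) {s t : ℝ} (hs : s ∈ Icc a b) (ht : t ∈ Icc a b) :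
    ‖y t‖ ≤ ‖y s‖ * Real.exp (C * |t - s|) := by
  rcases le_total s t with hst | hts
  · rw [abs_of_nonneg (sub_nonneg.2 hst)]
    exact norm_le_norm_mul_exp_of_norm_deriv_le_of_le hy hC hs ht hst
  · have hneg : ∀ r ∈ Icc (-b) (-a), -r ∈ Icc a b := fun r hr =>
      ⟨by linarith [hr.2], by linarith [hr.1]⟩
    have hreflected := norm_le_norm_mul_exp_of_norm_deriv_le_of_le
      (y := fun r => y (-r)) (y' := fun r => -y' (-r)) (s := -s) (t := -t)
      (fun r hr => hasDerivWithinAt_comp_neg (hy _ (hneg r hr)))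
      (fun r hr => by simpa using hC _ (hneg r hr))
      ⟨neg_le_neg hs.2, neg_le_neg hs.1⟩ ⟨neg_le_neg ht.2, neg_le_neg ht.1⟩ (neg_le_neg hts)
    rw [abs_of_nonpos (sub_nonpos.2 hts)]
    simpa [neg_add_eq_sub] using hreflected

/-- The radial retraction of a normed space onto its closed ball of radius `r`. Precomposing a
linear field with it makes the field bounded, as the Picard–Lindelöf theorem requires. -/
noncomputable def radialRetraction (r : ℝ) (x : E) : E := (r / max r ‖x‖) • x

theorem radialRetraction_eq_self {r : ℝ} (hr : 0 < r) {x : E} (hx : ‖x‖ ≤ r) :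
    radialRetraction r x = x := by
  rw [radialRetraction, max_eq_left hx, div_self hr.ne', one_smul]

theorem norm_radialRetraction_le_norm {r : ℝ} (hr : 0 < r) (x : E) :
    ‖radialRetraction r x‖ ≤ ‖x‖ := by
  have hmax : 0 < max r ‖x‖ := hr.trans_le (le_max_left _ _)
  rw [radialRetraction, norm_smul, Real.norm_of_nonneg (by positivity)]
  exact mul_le_of_le_one_left (norm_nonneg x) ((div_le_one hmax).2 (le_max_left _ _))

theorem norm_radialRetraction_le {r : ℝ} (hr : 0 < r) (x : E) : ‖radialRetraction r x‖ ≤ r := by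
  have hmax : 0 < max r ‖x‖ := hr.trans_le (le_max_left _ _)
  rw [radialRetraction, norm_smul, Real.norm_of_nonneg (by positivity), div_mul_eq_mul_div,
    div_le_iff₀ hmax]
  exact mul_le_mul_of_nonneg_left (le_max_right _ _) hr.le

theorem norm_radialRetraction_sub_le {r : ℝ} (hr : 0 < r) (x y : E) :
    ‖radialRetraction r x - radialRetraction r y‖ ≤ 2 * ‖x - y‖ := by
  set p := max r ‖x‖ with hp_def
  set q := max r ‖y‖ with hq_def
  have hp : 0 < p := hr.trans_le (le_max_left _ _)
  have hq : 0 < q := hr.trans_le (le_max_left _ _)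
  have hscale : r / p ≤ 1 := (div_le_one hp).2 (le_max_left _ _)
  have hunit : ‖q⁻¹ • y‖ ≤ 1 := by
    rw [norm_smul, norm_inv, Real.norm_of_nonneg hq.le, inv_mul_le_one₀ hq]
    exact le_max_right _ _
  have hpq : |q - p| ≤ ‖x - y‖ := by
    calc |q - p| ≤ max |r - r| |‖y‖ - ‖x‖| := abs_max_sub_max_le_max _ _ _ _
      _ ≤ ‖x - y‖ := by
        rw [norm_sub_rev x y]
        exact max_le (by simp) (abs_norm_sub_norm_le y x)
  have hsplit : radialRetraction r x - radialRetraction r y =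
      (r / p) • ((x - y) + (q - p) • q⁻¹ • y) := by
    have hcoeff : r / q = r / p - r / p * ((q - p) * q⁻¹) := by field_simp; ring
    rw [radialRetraction, radialRetraction, ← hp_def, ← hq_def, hcoeff]
    module
  calc ‖radialRetraction r x - radialRetraction r y‖
      = r / p * ‖(x - y) + (q - p) • q⁻¹ • y‖ := by
        rw [hsplit, norm_smul, Real.norm_of_nonneg (by positivity)]
    _ ≤ 1 * (‖x - y‖ + |q - p| * 1) := by
        gcongr
        refine (norm_add_le _ _).trans ?_
        rw [norm_smul, Real.norm_eq_abs]
        gcongr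
    _ ≤ 2 * ‖x - y‖ := by linarith

theorem exists_norm_le_of_isCompact_of_continuousOn_apply [CompleteSpace E] {α : Type*}
    [TopologicalSpace α] {L : α → E →L[ℝ] F} {s : Set α} (hs : IsCompact s)
    (hL : ∀ x, ContinuousOn (L · x) s) : ∃ C, ∀ t ∈ s, ‖L t‖ ≤ C := by
  obtain ⟨C, hC⟩ := banach_steinhaus (g := fun t : s => L t) fun x =>
    (hs.exists_bound_of_continuousOn (hL x)).imp fun _ hC t => hC t t.2
  exact ⟨C, fun t ht => hC ⟨t, ht⟩⟩

theorem eq_zero_of_hasDerivWithinAt_clm_apply [CompleteSpace E] {L : ℝ → E →L[ℝ] E}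
    (hL : ∀ x, ContinuousOn (L · x) (Icc a b)) {y : ℝ → E}
    (hy : ∀ t ∈ Icc a b, HasDerivWithinAt y (L t (y t)) (Icc a b) t) {t₀ : ℝ}
    (ht₀ : t₀ ∈ Icc a b) (h₀ : y t₀ = 0) {t : ℝ} (ht : t ∈ Icc a b) : y t = 0 := by
  obtain ⟨C, hC⟩ := exists_norm_le_of_isCompact_of_continuousOn_apply isCompact_Icc hL
  simpa [h₀] using norm_le_norm_mul_exp_of_norm_deriv_le hy
    (fun s hs => (L s).le_of_opNorm_le (hC s hs) (y s)) ht₀ ht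

theorem isPicardLindelof_clm_comp_radialRetraction {L : ℝ → E →L[ℝ] E} {C : ℝ} (hC₀ : 0 ≤ C)
    (hL : ∀ x, ContinuousOn (L · x) (Icc a b)) (hC : ∀ t ∈ Icc a b, ‖L t‖ ≤ C) {r : ℝ}
    (hr : 0 < r) (t₀ : Icc a b) (y₀ : E) :
    IsPicardLindelof (fun t y => L t (radialRetraction r y)) t₀ y₀
      (C * r * (b - a)).toNNReal 0 (C * r).toNNReal (C * 2).toNNReal where
  lipschitzOnWith t ht := by
    refine (LipschitzWith.of_dist_le_mul fun x y => ?_).lipschitzOnWith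
    rw [dist_eq_norm, dist_eq_norm, Real.coe_toNNReal _ (by positivity), ← map_sub, mul_assoc]
    exact ((L t).le_of_opNorm_le (hC t ht) _).trans
      (mul_le_mul_of_nonneg_left (norm_radialRetraction_sub_le hr x y) hC₀)
  continuousOn x _ := hL _
  norm_le t ht x _ := by
    rw [Real.coe_toNNReal _ (by positivity)]
    exact ((L t).le_of_opNorm_le (hC t ht) _).trans
      (mul_le_mul_of_nonneg_left (norm_radialRetraction_le hr x) hC₀)
  mul_max_le := by
    have hab : 0 ≤ b - a := sub_nonneg.2 (t₀.2.1.trans t₀.2.2)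
    rw [Real.coe_toNNReal _ (by positivity), Real.coe_toNNReal _ (by positivity), NNReal.coe_zero,
      sub_zero]
    gcongr
    exact max_le (sub_le_sub_left t₀.2.1 _) (sub_le_sub_right t₀.2.2 _)

theorem exists_forall_hasDerivWithinAt_clm_apply [CompleteSpace E] {L : ℝ → E →L[ℝ] E}
    (hL : ∀ x, ContinuousOn (L · x) (Icc a b)) {t₀ : ℝ} (ht₀ : t₀ ∈ Icc a b) (y₀ : E) :
    ∃ y : ℝ → E, y t₀ = y₀ ∧ ∀ t ∈ Icc a b, HasDerivWithinAt y (L t (y t)) (Icc a b) t := by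
  obtain ⟨C, hC⟩ := exists_norm_le_of_isCompact_of_continuousOn_apply isCompact_Icc hL
  have hC₀ : 0 ≤ C := (norm_nonneg _).trans (hC t₀ ht₀)
  set r : ℝ := (‖y₀‖ + 1) * Real.exp (C * (b - a)) with hr_def
  have hr : 0 < r := by positivity
  obtain ⟨y, hy₀, hy⟩ := (isPicardLindelof_clm_comp_radialRetraction hC₀ hL hC hr ⟨t₀, ht₀⟩
    y₀).exists_eq_forall_mem_Icc_hasDerivWithinAt₀
  have hgrowth : ∀ t ∈ Icc a b, ‖L t (radialRetraction r (y t))‖ ≤ C * ‖y t‖ := fun t ht =>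
    ((L t).le_of_opNorm_le (hC t ht) _).trans
      (mul_le_mul_of_nonneg_left (norm_radialRetraction_le_norm hr _) hC₀)
  have hbound : ∀ t ∈ Icc a b, ‖y t‖ ≤ r := fun t ht =>
    calc ‖y t‖ ≤ ‖y t₀‖ * Real.exp (C * |t - t₀|) :=
          norm_le_norm_mul_exp_of_norm_deriv_le hy hgrowth ht₀ ht
      _ ≤ r := by
          rw [hr_def, hy₀]
          gcongr
          · linarith
          · exact abs_sub_le_of_le_of_le ht.1 ht.2 ht₀.1 ht₀.2
  refine ⟨y, hy₀, fun t ht => ?_⟩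
  simpa only [radialRetraction_eq_self hr (hbound t ht)] using hy t ht

end LinearODE

section MatrixCalculus

variable {l m n X 𝕜 : Type*} [TopologicalSpace X] [RCLike 𝕜] {s : Set X}

@[fun_prop]
theorem continuousOn_matrix_mul [Fintype m] {A : X → Matrix l m 𝕜} {B : X → Matrix m n 𝕜}
    (hA : ContinuousOn A s) (hB : ContinuousOn B s) : ContinuousOn (fun x => A x * B x) s :=
  (continuous_fst.matrix_mul continuous_snd).comp_continuousOn (hA.prodMk hB)

@[fun_prop]
theorem continuousOn_conjTranspose {A : X → Matrix m n 𝕜} (hA : ContinuousOn A s) :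
    ContinuousOn (fun x => (A x)ᴴ) s :=
  continuous_id.matrix_conjTranspose.comp_continuousOn hA

theorem continuousOn_matrix_inv [Fintype n] [DecidableEq n] {A : X → Matrix n n 𝕜}
    (hA : ContinuousOn A s) (hu : ∀ x ∈ s, IsUnit (A x)) : ContinuousOn (fun x => (A x)⁻¹) s := by
  refine fun x hx => (continuousAt_matrix_inv (A x) ?_).comp_continuousWithinAt (hA x hx)
  rw [Ring.inverse_eq_inv']
  exact continuousAt_inv₀ ((isUnit_iff_isUnit_det _).1 (hu x hx)).ne_zero

variable {s : Set ℝ} {t : ℝ}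

theorem hasDerivWithinAt_linearMap_comp {E F : Type*} [NormedAddCommGroup E] [NormedSpace ℝ E]
    [FiniteDimensional ℝ E] [NormedAddCommGroup F] [NormedSpace ℝ F] (L : E →ₗ[ℝ] F)
    {f : ℝ → E} {f' : E} (hf : HasDerivWithinAt f f' s t) :
    HasDerivWithinAt (fun x => L (f x)) (L f') s t :=
  L.toContinuousLinearMap.hasFDerivAt.comp_hasDerivWithinAt t hf

variable [Fintype n] {f g : ℝ → Matrix n n 𝕜} {f' g' : Matrix n n 𝕜}

theorem hasDerivWithinAt_mulVec (hf : HasDerivWithinAt f f' s t) (x : n → 𝕜) :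
    HasDerivWithinAt (fun r => f r *ᵥ x) (f' *ᵥ x) s t :=
  hasDerivWithinAt_linearMap_comp
    (((mulVecBilin 𝕜 𝕜).flip x : Matrix n n 𝕜 →ₗ[𝕜] n → 𝕜).restrictScalars ℝ) hf

theorem hasDerivWithinAt_matrix_mul (hf : HasDerivWithinAt f f' s t)
    (hg : HasDerivWithinAt g g' s t) :
    HasDerivWithinAt (fun x => f x * g x) (f' * g t + f t * g') s t := by
  classical
  -- Differentiability depends only on the topology, so any submultiplicative norm will do.
  let := Matrix.linftyOpNormedRing (n := n) (α := 𝕜)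
  let := Matrix.linftyOpNormedAlgebra (R := ℝ) (n := n) (α := 𝕜)
  exact HasDerivWithinAt.mul hf hg

theorem hasDerivWithinAt_matrix_inv [DecidableEq n] (hf : HasDerivWithinAt f f' s t)
    (hu : IsUnit (f t)) :
    HasDerivWithinAt (fun x => (f x)⁻¹) (-((f t)⁻¹ * f' * (f t)⁻¹)) s t := by
  let := Matrix.linftyOpNormedRing (n := n) (α := 𝕜)
  let := Matrix.linftyOpNormedAlgebra (R := ℝ) (n := n) (α := 𝕜)
  have : @CompleteSpace (Matrix n n 𝕜) PseudoMetricSpace.toUniformSpace :=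
    FiniteDimensional.complete ℝ _
  have hinv := (hasFDerivAt_ringInverse (𝕜 := ℝ) hu.unit).comp_hasDerivWithinAt t hf
  simpa only [Function.comp_def, nonsing_inv_eq_ringInverse, IsUnit.unit_spec,
    ← Ring.inverse_unit, neg_apply, ContinuousLinearMap.mulLeftRight_apply]
    using! hinv

end MatrixCalculus

section Loewner

open scoped ComplexOrder

variable {n 𝕜 : Type*} [RCLike 𝕜] {a b : ℝ}

theorem mulVec_eq_zero_of_add_mulVec_eq_zero [Fintype n] {A B : Matrix n n 𝕜}
    (hA : A.PosSemidef) (hB : B.PosSemidef) {x : n → 𝕜} (hx : (A + B) *ᵥ x = 0) : A *ᵥ x = 0 := by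
  have hsum : star x ⬝ᵥ A *ᵥ x + star x ⬝ᵥ B *ᵥ x = 0 := by
    rw [← dotProduct_add, ← add_mulVec, hx, dotProduct_zero]
  exact (hA.dotProduct_mulVec_zero_iff x).1 ((add_eq_zero_iff_of_nonneg
    (hA.dotProduct_mulVec_nonneg x) (hB.dotProduct_mulVec_nonneg x)).1 hsum).1

theorem mulVec_mulVec_eq_zero_of_conjTranspose_mul_mul [Fintype n] {m : Type*} [Fintype m]
    {A : Matrix m m 𝕜} (hA : A.PosSemidef) {B : Matrix m n 𝕜} {x : n → 𝕜}
    (hx : (Bᴴ * A * B) *ᵥ x = 0) : A *ᵥ B *ᵥ x = 0 := by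
  refine (hA.dotProduct_mulVec_zero_iff _).1 ?_
  rw [star_mulVec, ← dotProduct_mulVec, mulVec_mulVec, mulVec_mulVec, hx, dotProduct_zero]

theorem posSemidef_mul_inv [Fintype n] [DecidableEq n] {U V : Matrix n n 𝕜} (hU : IsUnit U)
    (h : (Uᴴ * V).PosSemidef) : (V * U⁻¹).PosSemidef := by
  have hcancel : (U⁻¹)ᴴ * Uᴴ = 1 := by
    rw [← conjTranspose_mul, mul_nonsing_inv _ ((isUnit_iff_isUnit_det _).1 hU),
      conjTranspose_one]
  simpa [← Matrix.mul_assoc, hcancel] using h.conjTranspose_mul_mul_same U⁻¹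

theorem hasDerivWithinAt_re_dotProduct_mulVec [Fintype n] {W : ℝ → Matrix n n 𝕜} {W' : Matrix n n 𝕜}
    {s : Set ℝ} {t : ℝ} (hW : HasDerivWithinAt W W' s t) (x y : n → 𝕜) :
    HasDerivWithinAt (fun r => RCLike.re (x ⬝ᵥ W r *ᵥ y)) (RCLike.re (x ⬝ᵥ W' *ᵥ y)) s t :=
  hasDerivWithinAt_linearMap_comp
    (RCLike.reLm ∘ₗ (dotProductBilin 𝕜 𝕜 x : (n → 𝕜) →ₗ[𝕜] 𝕜).restrictScalars ℝ)
    (hasDerivWithinAt_mulVec hW y)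

theorem isHermitian_sub_of_hasDerivWithinAt [Finite n] {W W' : ℝ → Matrix n n 𝕜}
    (hW : ∀ t ∈ Icc a b, HasDerivWithinAt W (W' t) (Icc a b) t)
    (hW' : ∀ t ∈ Icc a b, (W' t).IsHermitian) {s t : ℝ} (hs : s ∈ Icc a b) (ht : t ∈ Icc a b) :
    (W s - W t).IsHermitian := by
  cases nonempty_fintype n
  have hderiv : ∀ r ∈ Icc a b,
      HasDerivWithinAt (fun r => (W r - W t)ᴴ - (W r - W t)) 0 (Icc a b) r := fun r hr => by
    have hsub := (hW r hr).sub_const (W t)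
    rw [← sub_self (W' r)]
    nth_rw 1 [← (hW' r hr).eq]
    exact hsub.star.sub hsub
  exact sub_eq_zero.1 (eq_zero_of_hasDerivWithinAt_clm_apply (L := fun _ => 0)
    (fun _ => continuousOn_const) hderiv ht (by simp) hs)

theorem posSemidef_sub_of_hasDerivWithinAt_neg [Finite n] {W D : ℝ → Matrix n n 𝕜}
    (hW : ∀ t ∈ Icc a b, HasDerivWithinAt W (-D t) (Icc a b) t)
    (hD : ∀ t ∈ Icc a b, (D t).PosSemidef) {s t : ℝ} (hs : s ∈ Icc a b) (ht : t ∈ Icc a b)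
    (hst : s ≤ t) : (W s - W t).PosSemidef := by
  cases nonempty_fintype n
  have hherm : (W s - W t).IsHermitian :=
    isHermitian_sub_of_hasDerivWithinAt hW (fun r hr => (hD r hr).isHermitian.neg) hs ht
  refine .of_dotProduct_mulVec_nonneg hherm fun x => ?_
  have hderiv r (hr : r ∈ Icc a b) := hasDerivWithinAt_re_dotProduct_mulVec (hW r hr) (star x) x
  have hanti : AntitoneOn (fun r => RCLike.re (star x ⬝ᵥ W r *ᵥ x)) (Icc a b) := by
    refine antitoneOn_of_hasDerivWithinAt_nonpos (convex_Icc a b)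
      (fun r hr => (hderiv r hr).continuousWithinAt)
      (fun r hr => (hderiv r (interior_subset hr)).mono interior_subset) fun r hr => ?_
    simpa [neg_mulVec] using (hD r (interior_subset hr)).re_dotProduct_nonneg x
  refine RCLike.nonneg_iff.2 ⟨?_, hherm.im_star_dotProduct_mulVec_self x⟩
  simpa [sub_mulVec] using hanti hs ht hst

end Loewner

section Hamiltonian

variable {n 𝕜 : Type*} [Fintype n] [RCLike 𝕜] {A H R U V : ℝ → Matrix n n 𝕜} {s : Set ℝ}

/-- The pair `(U, V)` solves on `s` the linear Hamiltonian system associated by Radon's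
linearization with the Riccati equation `X' = -(H + X A + Aᴴ X - X R X)`. -/
structure IsHamiltonianSolution (A H R U V : ℝ → Matrix n n 𝕜) (s : Set ℝ) : Prop where
  hasDerivWithinAt_fst : ∀ t ∈ s, HasDerivWithinAt U (A t * U t - R t * V t) s t
  hasDerivWithinAt_snd : ∀ t ∈ s, HasDerivWithinAt V (-(H t * U t) - (A t)ᴴ * V t) s t

theorem exists_isHamiltonianSolution {a b t₀ : ℝ} (hA : ContinuousOn A (Icc a b))
    (hH : ContinuousOn H (Icc a b)) (hR : ContinuousOn R (Icc a b)) (ht₀ : t₀ ∈ Icc a b)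
    (U₀ V₀ : Matrix n n 𝕜) :
    ∃ U V, IsHamiltonianSolution A H R U V (Icc a b) ∧ U t₀ = U₀ ∧ V t₀ = V₀ := by
  have : FiniteDimensional ℝ (Matrix n n 𝕜 × Matrix n n 𝕜) := Module.Finite.prod
  have : @CompleteSpace (Matrix n n 𝕜 × Matrix n n 𝕜) PseudoMetricSpace.toUniformSpace :=
    FiniteDimensional.complete ℝ _
  let L (t : ℝ) : Matrix n n 𝕜 × Matrix n n 𝕜 →L[ℝ] Matrix n n 𝕜 × Matrix n n 𝕜 :=
    LinearMap.toContinuousLinearMap <|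
      (LinearMap.mulLeft ℝ (A t) ∘ₗ LinearMap.fst ℝ _ _ -
        LinearMap.mulLeft ℝ (R t) ∘ₗ LinearMap.snd ℝ _ _).prod
      (-(LinearMap.mulLeft ℝ (H t) ∘ₗ LinearMap.fst ℝ _ _) -
        LinearMap.mulLeft ℝ (A t)ᴴ ∘ₗ LinearMap.snd ℝ _ _)
  have hL : ∀ x, ContinuousOn (L · x) (Icc a b) := fun x => by
    change ContinuousOn
      (fun t => (A t * x.1 - R t * x.2, -(H t * x.1) - (A t)ᴴ * x.2)) (Icc a b)
    fun_prop
  obtain ⟨y, hy₀, hy⟩ := exists_forall_hasDerivWithinAt_clm_apply hL ht₀ (U₀, V₀)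
  refine ⟨fun t => (y t).1, fun t => (y t).2, ⟨fun t ht => ?_, fun t ht => ?_⟩, ?_, ?_⟩
  · exact hasDerivWithinAt_linearMap_comp (LinearMap.fst ℝ _ _) (hy t ht)
  · exact hasDerivWithinAt_linearMap_comp (LinearMap.snd ℝ _ _) (hy t ht)
  · simp only [hy₀]
  · simp only [hy₀]

open scoped ComplexOrder

namespace IsHamiltonianSolution

theorem hasDerivWithinAt_conjTranspose_mul (h : IsHamiltonianSolution A H R U V s)
    (hR : ∀ t ∈ s, (R t).IsHermitian) {t : ℝ} (ht : t ∈ s) :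
    HasDerivWithinAt (fun t => (U t)ᴴ * V t) (-((V t)ᴴ * R t * V t + (U t)ᴴ * H t * U t)) s t := by
  have hderiv := hasDerivWithinAt_matrix_mul (h.hasDerivWithinAt_fst t ht).star
    (h.hasDerivWithinAt_snd t ht)
  have hval : -((V t)ᴴ * R t * V t + (U t)ᴴ * H t * U t) =
      star (A t * U t - R t * V t) * V t + star (U t) * (-(H t * U t) - (A t)ᴴ * V t) := by
    simp only [star_eq_conjTranspose, conjTranspose_sub, conjTranspose_mul, (hR t ht).eq]
    noncomm_ring
  rw [hval]
  exact hderiv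

variable {a b : ℝ}

theorem posSemidef_sub (h : IsHamiltonianSolution A H R U V (Icc a b))
    (hH : ∀ t ∈ Icc a b, (H t).PosSemidef) (hR : ∀ t ∈ Icc a b, (R t).PosSemidef) {s t : ℝ}
    (hs : s ∈ Icc a b) (ht : t ∈ Icc a b) (hst : s ≤ t) :
    ((U s)ᴴ * V s - (U t)ᴴ * V t).PosSemidef :=
  posSemidef_sub_of_hasDerivWithinAt_neg (W := fun r => (U r)ᴴ * V r)
    (fun _ hr => h.hasDerivWithinAt_conjTranspose_mul (fun r hr => (hR r hr).isHermitian) hr)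
    (fun r hr => ((hR r hr).conjTranspose_mul_mul_same (V r)).add
      ((hH r hr).conjTranspose_mul_mul_same (U r))) hs ht hst

theorem posSemidef_conjTranspose_mul (h : IsHamiltonianSolution A H R U V (Icc a b))
    (hH : ∀ t ∈ Icc a b, (H t).PosSemidef) (hR : ∀ t ∈ Icc a b, (R t).PosSemidef)
    (hb : ((U b)ᴴ * V b).PosSemidef) {t : ℝ} (ht : t ∈ Icc a b) : ((U t)ᴴ * V t).PosSemidef := by
  simpa using (h.posSemidef_sub hH hR ht (right_mem_Icc.2 (ht.1.trans ht.2)) ht.2).add hb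

theorem mulVec_mulVec_eq_zero (h : IsHamiltonianSolution A H R U V (Icc a b))
    (hH : ∀ t ∈ Icc a b, (H t).PosSemidef) (hR : ∀ t ∈ Icc a b, (R t).PosSemidef)
    (hb : ((U b)ᴴ * V b).PosSemidef) (hab : a < b) {x : n → 𝕜} (hx : U a *ᵥ x = 0) {t : ℝ}
    (ht : t ∈ Icc a b) : R t *ᵥ V t *ᵥ x = 0 := by
  have ha : a ∈ Icc a b := left_mem_Icc.2 hab.le
  have hWa : ((U a)ᴴ * V a) *ᵥ x = 0 := by
    rw [← (h.posSemidef_conjTranspose_mul hH hR hb ha).isHermitian.eq, conjTranspose_mul,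
      conjTranspose_conjTranspose, ← mulVec_mulVec, hx, mulVec_zero]
  have hW : ∀ r ∈ Icc a b, ((U r)ᴴ * V r) *ᵥ x = 0 := fun r hr =>
    mulVec_eq_zero_of_add_mulVec_eq_zero (h.posSemidef_conjTranspose_mul hH hR hb hr)
      (h.posSemidef_sub hH hR ha hr hr.1) (by rwa [add_sub_cancel])
  have hderiv := hasDerivWithinAt_mulVec
    (h.hasDerivWithinAt_conjTranspose_mul (fun r hr => (hR r hr).isHermitian) ht) x
  have hderiv_zero := (hasDerivWithinAt_const t (Icc a b) (0 : n → 𝕜)).congr hW (hW t ht)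
  have hdissipation := (uniqueDiffOn_Icc hab t ht).eq_deriv _ hderiv hderiv_zero
  rw [neg_mulVec, neg_eq_zero] at hdissipation
  exact mulVec_mulVec_eq_zero_of_conjTranspose_mul_mul (hR t ht)
    (mulVec_eq_zero_of_add_mulVec_eq_zero ((hR t ht).conjTranspose_mul_mul_same _)
      ((hH t ht).conjTranspose_mul_mul_same _) hdissipation)

theorem mono (h : IsHamiltonianSolution A H R U V s) {s' : Set ℝ} (hs : s' ⊆ s) :
    IsHamiltonianSolution A H R U V s' where
  hasDerivWithinAt_fst t ht := (h.hasDerivWithinAt_fst t (hs ht)).mono hs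
  hasDerivWithinAt_snd t ht := (h.hasDerivWithinAt_snd t (hs ht)).mono hs

theorem mulVec_right_eq_zero (h : IsHamiltonianSolution A H R U V (Icc a b))
    (hA : ContinuousOn A (Icc a b)) (hH : ∀ t ∈ Icc a b, (H t).PosSemidef)
    (hR : ∀ t ∈ Icc a b, (R t).PosSemidef) (hb : ((U b)ᴴ * V b).PosSemidef) (hab : a < b)
    {x : n → 𝕜} (hx : U a *ᵥ x = 0) : U b *ᵥ x = 0 := by
  have hflow : ∀ t ∈ Icc a b,
      HasDerivWithinAt (fun r => U r *ᵥ x) (A t *ᵥ U t *ᵥ x) (Icc a b) t := fun t ht => by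
    simpa [sub_mulVec, ← mulVec_mulVec, h.mulVec_mulVec_eq_zero hH hR hb hab hx ht]
      using hasDerivWithinAt_mulVec (h.hasDerivWithinAt_fst t ht) x
  exact eq_zero_of_hasDerivWithinAt_clm_apply
    (L := fun t => ((mulVecLin (A t)).restrictScalars ℝ).toContinuousLinearMap)
    (fun v => (continuous_id.matrix_mulVec continuous_const).comp_continuousOn hA) hflow
    (left_mem_Icc.2 hab.le) hx (right_mem_Icc.2 hab.le)

variable [DecidableEq n]

theorem isUnit_fst (h : IsHamiltonianSolution A H R U V (Icc a b))
    (hA : ContinuousOn A (Icc a b)) (hH : ∀ t ∈ Icc a b, (H t).PosSemidef)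
    (hR : ∀ t ∈ Icc a b, (R t).PosSemidef) (hUb : IsUnit (U b))
    (hb : ((U b)ᴴ * V b).PosSemidef) {s : ℝ} (hs : s ∈ Icc a b) : IsUnit (U s) := by
  rcases hs.2.eq_or_lt with rfl | hsb
  · exact hUb
  have hsub : Icc s b ⊆ Icc a b := Icc_subset_Icc_left hs.1
  refine mulVec_injective_iff_isUnit.1 ((injective_iff_map_eq_zero (mulVecLin (U s))).2
    fun x hx => mulVec_injective_iff_isUnit.2 hUb ?_)
  rw [mulVec_zero]
  exact (h.mono hsub).mulVec_right_eq_zero (hA.mono hsub) (fun t ht => hH t (hsub ht))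
    (fun t ht => hR t (hsub ht)) hb hsb hx

theorem hasDerivWithinAt_mul_inv (h : IsHamiltonianSolution A H R U V s) {t : ℝ} (ht : t ∈ s)
    (hU : IsUnit (U t)) :
    HasDerivWithinAt (fun t => V t * (U t)⁻¹)
      (-(H t + V t * (U t)⁻¹ * A t + (A t)ᴴ * (V t * (U t)⁻¹) -
        V t * (U t)⁻¹ * R t * (V t * (U t)⁻¹))) s t := by
  have hderiv := hasDerivWithinAt_matrix_mul (h.hasDerivWithinAt_snd t ht)
    (hasDerivWithinAt_matrix_inv (h.hasDerivWithinAt_fst t ht) hU)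
  have hcancel (M : Matrix n n 𝕜) : M * U t * (U t)⁻¹ = M :=
    mul_nonsing_inv_cancel_right _ _ ((isUnit_iff_isUnit_det _).1 hU)
  convert! hderiv using 1
  simp only [Matrix.sub_mul, Matrix.mul_sub, Matrix.neg_mul, Matrix.mul_neg, ← Matrix.mul_assoc,
    hcancel]
  noncomm_ring

end IsHamiltonianSolution

end Hamiltonian

section Riccati

open scoped ComplexOrder

variable {n 𝕜 : Type*} [Fintype n] [RCLike 𝕜] {a b : ℝ}

theorem exists_posSemidef_hasDerivWithinAt_riccati {A H R : ℝ → Matrix n n 𝕜} (hab : a ≤ b)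
    (hA : ContinuousOn A (Icc a b)) (hHc : ContinuousOn H (Icc a b))
    (hRc : ContinuousOn R (Icc a b)) (hH : ∀ t ∈ Icc a b, (H t).PosSemidef)
    (hR : ∀ t ∈ Icc a b, (R t).PosSemidef) {P : Matrix n n 𝕜} (hP : P.PosSemidef) :
    ∃ X : ℝ → Matrix n n 𝕜, (∀ t ∈ Icc a b, (X t).PosSemidef) ∧ X b = P ∧
      ∀ t ∈ Icc a b, HasDerivWithinAt X
        (-(H t + X t * A t + (A t)ᴴ * X t - X t * R t * X t)) (Icc a b) t := by
  classical
  obtain ⟨U, V, h, hUb, hVb⟩ :=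
    exists_isHamiltonianSolution hA hHc hRc (right_mem_Icc.2 hab) 1 P
  have hb : ((U b)ᴴ * V b).PosSemidef := by simpa [hUb, hVb] using hP
  have hU : ∀ t ∈ Icc a b, IsUnit (U t) := fun t ht =>
    h.isUnit_fst hA hH hR (hUb ▸ isUnit_one) hb ht
  exact ⟨fun t => V t * (U t)⁻¹,
    fun t ht => posSemidef_mul_inv (hU t ht) (h.posSemidef_conjTranspose_mul hH hR hb ht),
    by simp [hUb, hVb], fun t ht => h.hasDerivWithinAt_mul_inv ht (hU t ht)⟩

variable {m : Type*} [Fintype m] [DecidableEq m]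

/-- The Riccati operator `X ↦ Q + X B + Bᴴ X - ρ X - (S + Eᴴ X)ᴴ N⁻¹ (S + Eᴴ X)` of the
linear-quadratic control problem with drift `B x + E u`, discount rate `ρ` and running cost
`xᴴ Q x + 2 Re (uᴴ S x) + uᴴ N u`. -/
noncomputable def lqRiccati (Q B : Matrix n n 𝕜) (E : Matrix n m 𝕜) (S : Matrix m n 𝕜)
    (N : Matrix m m 𝕜) (ρ : ℝ) (X : Matrix n n 𝕜) : Matrix n n 𝕜 :=
  Q + X * B + Bᴴ * X - ρ • X - (S + Eᴴ * X)ᴴ * N⁻¹ * (S + Eᴴ * X)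

theorem lqRiccati_eq_of_isHermitian [DecidableEq n] (Q B : Matrix n n 𝕜) (E : Matrix n m 𝕜)
    (S : Matrix m n 𝕜) {N : Matrix m m 𝕜} (hN : N.IsHermitian) (ρ : ℝ) {X : Matrix n n 𝕜}
    (hX : X.IsHermitian) :
    lqRiccati Q B E S N ρ X =
      Q - Sᴴ * N⁻¹ * S + X * (B - (ρ / 2) • 1 - E * N⁻¹ * S) +
        (B - (ρ / 2) • 1 - E * N⁻¹ * S)ᴴ * X - X * (E * N⁻¹ * Eᴴ) * X := by
  have hρ : ρ • X = (ρ / 2) • X + (ρ / 2) • X := by rw [← add_smul, add_halves]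
  rw [lqRiccati, hρ]
  simp only [conjTranspose_add, conjTranspose_sub, conjTranspose_mul, conjTranspose_smul,
    conjTranspose_one, conjTranspose_conjTranspose, hN.inv.eq, hX.eq, Matrix.mul_add,
    Matrix.add_mul, Matrix.mul_sub, Matrix.sub_mul, Matrix.mul_smul, Matrix.smul_mul,
    Matrix.mul_one, Matrix.one_mul, Matrix.mul_assoc, star_trivial]
  abel

/-- The divided difference of `lqRiccati` at `X` and `Y`: a linear map which sends `X - Y` to the
difference of the values, see `lqRiccatiDivDiff_sub`. -/
noncomputable def lqRiccatiDivDiff (B : Matrix n n 𝕜) (E : Matrix n m 𝕜) (S : Matrix m n 𝕜)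
    (N : Matrix m m 𝕜) (ρ : ℝ) (X Y : Matrix n n 𝕜) : Matrix n n 𝕜 →ₗ[ℝ] Matrix n n 𝕜 where
  toFun Z := Z * B + Bᴴ * Z - ρ • Z - (S + Eᴴ * X)ᴴ * N⁻¹ * (Eᴴ * Z) -
    (Eᴴ * Z)ᴴ * N⁻¹ * (S + Eᴴ * Y)
  map_add' Z W := by
    simp only [Matrix.mul_add, Matrix.add_mul, conjTranspose_add, smul_add]
    abel
  map_smul' c Z := by
    simp only [Matrix.mul_smul, Matrix.smul_mul, conjTranspose_smul, star_trivial, smul_sub,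
      smul_add, smul_comm ρ c, RingHom.id_apply]

theorem lqRiccatiDivDiff_sub (Q B : Matrix n n 𝕜) (E : Matrix n m 𝕜) (S : Matrix m n 𝕜)
    (N : Matrix m m 𝕜) (ρ : ℝ) (X Y : Matrix n n 𝕜) :
    lqRiccatiDivDiff B E S N ρ X Y (X - Y) =
      lqRiccati Q B E S N ρ X - lqRiccati Q B E S N ρ Y := by
  change (X - Y) * B + Bᴴ * (X - Y) - ρ • (X - Y) - (S + Eᴴ * X)ᴴ * N⁻¹ * (Eᴴ * (X - Y)) -
    (Eᴴ * (X - Y))ᴴ * N⁻¹ * (S + Eᴴ * Y) = _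
  simp only [lqRiccati, conjTranspose_add, conjTranspose_sub, Matrix.mul_add, Matrix.add_mul,
    Matrix.mul_sub, Matrix.sub_mul, smul_sub]
  abel

variable {Q B : ℝ → Matrix n n 𝕜} {E : ℝ → Matrix n m 𝕜} {S : ℝ → Matrix m n 𝕜}
  {N : ℝ → Matrix m m 𝕜} {ρ : ℝ}

theorem eqOn_of_hasDerivWithinAt_lqRiccati (hB : ContinuousOn B (Icc a b))
    (hE : ContinuousOn E (Icc a b)) (hS : ContinuousOn S (Icc a b)) (hN : ContinuousOn N (Icc a b))
    (hNu : ∀ t ∈ Icc a b, IsUnit (N t)) {X Y : ℝ → Matrix n n 𝕜}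
    (hX : ∀ t ∈ Icc a b, HasDerivWithinAt X
      (-lqRiccati (Q t) (B t) (E t) (S t) (N t) ρ (X t)) (Icc a b) t)
    (hY : ∀ t ∈ Icc a b, HasDerivWithinAt Y
      (-lqRiccati (Q t) (B t) (E t) (S t) (N t) ρ (Y t)) (Icc a b) t)
    {t₀ : ℝ} (ht₀ : t₀ ∈ Icc a b) (h₀ : X t₀ = Y t₀) : EqOn X Y (Icc a b) := by
  have hXc : ContinuousOn X (Icc a b) := fun t ht => (hX t ht).continuousWithinAt
  have hYc : ContinuousOn Y (Icc a b) := fun t ht => (hY t ht).continuousWithinAt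
  have hNinv := continuousOn_matrix_inv hN hNu
  let L (t : ℝ) : Matrix n n 𝕜 →L[ℝ] Matrix n n 𝕜 :=
    (-lqRiccatiDivDiff (B t) (E t) (S t) (N t) ρ (X t) (Y t)).toContinuousLinearMap
  have hL : ∀ Z, ContinuousOn (L · Z) (Icc a b) := fun Z => by
    change ContinuousOn (fun t => -(Z * B t + (B t)ᴴ * Z - ρ • Z -
      (S t + (E t)ᴴ * X t)ᴴ * (N t)⁻¹ * ((E t)ᴴ * Z) -
      ((E t)ᴴ * Z)ᴴ * (N t)⁻¹ * (S t + (E t)ᴴ * Y t))) (Icc a b)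
    fun_prop
  have hZ : ∀ t ∈ Icc a b,
      HasDerivWithinAt (fun r => X r - Y r) (L t (X t - Y t)) (Icc a b) t := fun t ht => by
    have hval : L t (X t - Y t) =
        -lqRiccati (Q t) (B t) (E t) (S t) (N t) ρ (X t) -
          -lqRiccati (Q t) (B t) (E t) (S t) (N t) ρ (Y t) := by
      change -lqRiccatiDivDiff (B t) (E t) (S t) (N t) ρ (X t) (Y t) (X t - Y t) = _
      rw [lqRiccatiDivDiff_sub (Q t), neg_sub_neg, neg_sub]
    rw [hval]
    exact (hX t ht).sub (hY t ht)
  exact fun t ht =>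
    sub_eq_zero.1 (eq_zero_of_hasDerivWithinAt_clm_apply hL hZ ht₀ (sub_eq_zero.2 h₀) ht)

theorem exists_posSemidef_hasDerivWithinAt_lqRiccati (hab : a ≤ b) (hQ : ContinuousOn Q (Icc a b))
    (hB : ContinuousOn B (Icc a b)) (hE : ContinuousOn E (Icc a b)) (hS : ContinuousOn S (Icc a b))
    (hN : ContinuousOn N (Icc a b)) (hNpos : ∀ t ∈ Icc a b, (N t).PosDef)
    (hQS : ∀ t ∈ Icc a b, (Q t - (S t)ᴴ * (N t)⁻¹ * S t).PosSemidef) {P : Matrix n n 𝕜}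
    (hP : P.PosSemidef) :
    ∃ X : ℝ → Matrix n n 𝕜, (∀ t ∈ Icc a b, (X t).PosSemidef) ∧ X b = P ∧
      ∀ t ∈ Icc a b, HasDerivWithinAt X
        (-lqRiccati (Q t) (B t) (E t) (S t) (N t) ρ (X t)) (Icc a b) t := by
  classical
  have hNinv := continuousOn_matrix_inv hN fun t ht => (hNpos t ht).isUnit
  obtain ⟨X, hX, hXb, hderiv⟩ := exists_posSemidef_hasDerivWithinAt_riccati
    (A := fun t => B t - (ρ / 2) • 1 - E t * (N t)⁻¹ * S t)
    (H := fun t => Q t - (S t)ᴴ * (N t)⁻¹ * S t) (R := fun t => E t * (N t)⁻¹ * (E t)ᴴ) hab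
    (by fun_prop) (by fun_prop) (by fun_prop) hQS
    (fun t ht => (hNpos t ht).inv.posSemidef.mul_mul_conjTranspose_same (E t)) hP
  refine ⟨X, hX, hXb, fun t ht => ?_⟩
  rw [lqRiccati_eq_of_isHermitian _ _ _ _ (hNpos t ht).isHermitian _ (hX t ht).isHermitian]
  exact hderiv t ht

end Riccati

section SchurComplement

open scoped ComplexOrder

variable {k m n 𝕜 : Type*} [Fintype k] [RCLike 𝕜]

theorem posDef_of_posSemidef_sub_smul_one [DecidableEq m] {N : Matrix m m 𝕜} {δ : ℝ} (hδ : 0 < δ)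
    (hN : (N - δ • (1 : Matrix m m 𝕜)).PosSemidef) : N.PosDef := by
  simpa using PosDef.posSemidef_add hN (PosDef.one.smul hδ)

theorem posDef_add_conjTranspose_mul_mul_same [Finite m] {N : Matrix m m 𝕜} (hN : N.PosDef)
    {K : Matrix k k 𝕜} (hK : K.PosSemidef) (σ : Matrix k m 𝕜) : (N + σᴴ * K * σ).PosDef :=
  hN.add_posSemidef (hK.conjTranspose_mul_mul_same σ)

variable [Fintype m] [DecidableEq m]

theorem posSemidef_schurComplement_add [Finite n] {N : Matrix m m 𝕜} (hN : N.PosDef)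
    {K : Matrix k k 𝕜} (hK : K.PosSemidef) {Q : Matrix n n 𝕜} {S : Matrix m n 𝕜}
    (hQS : (Q - Sᴴ * N⁻¹ * S).PosSemidef) (σ : Matrix k m 𝕜) (τ : Matrix k n 𝕜) :
    (Q + τᴴ * K * τ -
      (S + σᴴ * K * τ)ᴴ * (N + σᴴ * K * σ)⁻¹ * (S + σᴴ * K * τ)).PosSemidef := by
  cases nonempty_fintype n
  have hNσ := posDef_add_conjTranspose_mul_mul_same hN hK σ
  have := hN.isUnit.invertible
  have := hNσ.isUnit.invertible
  have hblocks : fromBlocks N S Sᴴ Q + (fromCols σ τ)ᴴ * K * fromCols σ τ =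
      fromBlocks (N + σᴴ * K * σ) (S + σᴴ * K * τ) (S + σᴴ * K * τ)ᴴ (Q + τᴴ * K * τ) := by
    rw [conjTranspose_fromCols_eq_fromRows_conjTranspose, fromRows_mul, fromRows_mul_fromCols,
      fromBlocks_add, conjTranspose_add, conjTranspose_mul, conjTranspose_mul,
      conjTranspose_conjTranspose, hK.isHermitian.eq, ← Matrix.mul_assoc]
  rw [← PosDef.fromBlocks₁₁ _ _ hNσ, ← hblocks]
  exact ((PosDef.fromBlocks₁₁ S Q hN).2 hQS).add
    (hK.conjTranspose_mul_mul_same (fromCols σ τ))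

end SchurComplement

open scoped ComplexOrder in
theorem riccati_ODE_Lambda_wellposed_general {k m n 𝕜 : Type*} [Fintype k] [Fintype m]
    [DecidableEq m] [Fintype n] [RCLike 𝕜] {a b : ℝ} (hab : a ≤ b) (ρ : ℝ)
    {K : ℝ → Matrix k k 𝕜} {Q B : ℝ → Matrix n n 𝕜} {τ : ℝ → Matrix k n 𝕜}
    {E : ℝ → Matrix n m 𝕜} {σ : ℝ → Matrix k m 𝕜} {S : ℝ → Matrix m n 𝕜} {N : ℝ → Matrix m m 𝕜}
    (hKc : ContinuousOn K (Icc a b)) (hQc : ContinuousOn Q (Icc a b))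
    (hBc : ContinuousOn B (Icc a b)) (hτc : ContinuousOn τ (Icc a b))
    (hEc : ContinuousOn E (Icc a b)) (hσc : ContinuousOn σ (Icc a b))
    (hSc : ContinuousOn S (Icc a b)) (hNc : ContinuousOn N (Icc a b))
    (hK : ∀ t ∈ Icc a b, (K t).PosSemidef) (hN : ∀ t ∈ Icc a b, (N t).PosDef)
    (hQS : ∀ t ∈ Icc a b, (Q t - (S t)ᴴ * (N t)⁻¹ * S t).PosSemidef) {P : Matrix n n 𝕜}
    (hP : P.PosSemidef) :
    let F (t : ℝ) : Matrix n n 𝕜 → Matrix n n 𝕜 := lqRiccati (Q t + (τ t)ᴴ * K t * τ t) (B t) (E t)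
      (S t + (σ t)ᴴ * K t * τ t) (N t + (σ t)ᴴ * K t * σ t) ρ
    ∃ Λ : ℝ → Matrix n n 𝕜,
      ((∀ t ∈ Icc a b, (Λ t).PosSemidef) ∧ Λ b = P ∧
        ∀ t ∈ Icc a b, HasDerivWithinAt Λ (-F t (Λ t)) (Icc a b) t) ∧
      ∀ Λ' : ℝ → Matrix n n 𝕜, Λ' b = P →
        (∀ t ∈ Icc a b, HasDerivWithinAt Λ' (-F t (Λ' t)) (Icc a b) t) → EqOn Λ' Λ (Icc a b) := by
  intro F
  have hNσ t (ht : t ∈ Icc a b) := posDef_add_conjTranspose_mul_mul_same (hN t ht) (hK t ht) (σ t)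
  obtain ⟨Λ, hΛ, hΛb, hderiv⟩ := exists_posSemidef_hasDerivWithinAt_lqRiccati (ρ := ρ) hab
    (by fun_prop) hBc hEc (by fun_prop) (by fun_prop) hNσ
    (fun t ht => posSemidef_schurComplement_add (hN t ht) (hK t ht) (hQS t ht) (σ t) (τ t)) hP
  refine ⟨Λ, ⟨hΛ, hΛb, hderiv⟩, fun Λ' hΛ'b hderiv' => ?_⟩
  exact eqOn_of_hasDerivWithinAt_lqRiccati hBc hEc (by fun_prop) (by fun_prop)
    (fun t ht => (hNσ t ht).isUnit) hderiv' hderiv (right_mem_Icc.2 hab) (hΛ'b.trans hΛb.symm)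

/-- Well-posedness of the matrix Riccati ODE for `Λ` given `K` (Step 6(ii)). -/
theorem riccati_ODE_Lambda_wellposed
    (d d₁ : ℕ) (hd : 1 ≤ d) (hd₁ : 1 ≤ d₁)
    (T ρ δ : ℝ) (hT : 0 < T) (hρ : 0 ≤ ρ) (hδ : 0 < δ)
    (K : ℝ → Matrix (Fin d) (Fin d) ℝ)
    (hKc : ContinuousOn K (Icc 0 T))
    (hKbdd : ∃ C : ℝ, ∀ t ∈ Icc (0 : ℝ) T, ‖K t‖ ≤ C)
    (hKpsd : ∀ t ∈ Icc (0 : ℝ) T, (K t).PosSemidef)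
    (Qhat bhatx σhatx : ℝ → Matrix (Fin d) (Fin d) ℝ)
    (bhat₁ σhat₁ : ℝ → Matrix (Fin d) (Fin d₁) ℝ)
    (Ihat : ℝ → Matrix (Fin d₁) (Fin d) ℝ)
    (Nhat : ℝ → Matrix (Fin d₁) (Fin d₁) ℝ)
    -- continuity of the coefficients on [0,T]
    (hQc : ContinuousOn Qhat (Icc 0 T)) (hbxc : ContinuousOn bhatx (Icc 0 T))
    (hσxc : ContinuousOn σhatx (Icc 0 T)) (hb₁c : ContinuousOn bhat₁ (Icc 0 T))
    (hσ₁c : ContinuousOn σhat₁ (Icc 0 T)) (hIc : ContinuousOn Ihat (Icc 0 T))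
    (hNc : ContinuousOn Nhat (Icc 0 T))
    -- boundedness of the coefficients on [0,T]
    (hbdd : ∃ C : ℝ, ∀ t ∈ Icc (0 : ℝ) T,
      ‖Qhat t‖ ≤ C ∧ ‖bhatx t‖ ≤ C ∧ ‖σhatx t‖ ≤ C ∧ ‖bhat₁ t‖ ≤ C ∧ ‖σhat₁ t‖ ≤ C ∧
        ‖Ihat t‖ ≤ C ∧ ‖Nhat t‖ ≤ C)
    -- pointwise structural conditions
    (hQ : ∀ t ∈ Icc (0 : ℝ) T, (Qhat t).PosSemidef)
    (hN : ∀ t ∈ Icc (0 : ℝ) T, (Nhat t).IsHermitian ∧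
      (Nhat t - δ • (1 : Matrix (Fin d₁) (Fin d₁) ℝ)).PosSemidef)
    (hQI : ∀ t ∈ Icc (0 : ℝ) T, (Qhat t - (Ihat t)ᵀ * (Nhat t)⁻¹ * (Ihat t)).PosSemidef)
    (Phat : Matrix (Fin d) (Fin d) ℝ) (hPhat : Phat.PosSemidef) :
    ∃ Λ : ℝ → Matrix (Fin d) (Fin d) ℝ,
      ((∀ t ∈ Icc (0 : ℝ) T, (Λ t).PosSemidef) ∧
        ContinuousOn Λ (Icc 0 T) ∧
        (∃ C : ℝ, ∀ t ∈ Icc (0 : ℝ) T, ‖Λ t‖ ≤ C) ∧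
        Λ T = Phat ∧
        ∀ t ∈ Icc (0 : ℝ) T,
          HasDerivWithinAt Λ
            (-(Qhat t + (σhatx t)ᵀ * K t * σhatx t + Λ t * bhatx t + (bhatx t)ᵀ * Λ t -
              ρ • Λ t -
              (Ihat t + (σhat₁ t)ᵀ * K t * σhatx t + (bhat₁ t)ᵀ * Λ t)ᵀ *
                (Nhat t + (σhat₁ t)ᵀ * K t * σhat₁ t)⁻¹ *
                (Ihat t + (σhat₁ t)ᵀ * K t * σhatx t + (bhat₁ t)ᵀ * Λ t)))
            (Icc 0 T) t) ∧
      ∀ Λ' : ℝ → Matrix (Fin d) (Fin d) ℝ,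
        ((∀ t ∈ Icc (0 : ℝ) T, (Λ' t).PosSemidef) ∧
          ContinuousOn Λ' (Icc 0 T) ∧
          (∃ C : ℝ, ∀ t ∈ Icc (0 : ℝ) T, ‖Λ' t‖ ≤ C) ∧
          Λ' T = Phat ∧
          ∀ t ∈ Icc (0 : ℝ) T,
            HasDerivWithinAt Λ'
              (-(Qhat t + (σhatx t)ᵀ * K t * σhatx t + Λ' t * bhatx t + (bhatx t)ᵀ * Λ' t -
                ρ • Λ' t -
                (Ihat t + (σhat₁ t)ᵀ * K t * σhatx t + (bhat₁ t)ᵀ * Λ' t)ᵀ *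
                  (Nhat t + (σhat₁ t)ᵀ * K t * σhat₁ t)⁻¹ *
                  (Ihat t + (σhat₁ t)ᵀ * K t * σhatx t + (bhat₁ t)ᵀ * Λ' t)))
              (Icc 0 T) t) →
        EqOn Λ' Λ (Icc 0 T) := by
  obtain ⟨Λ, ⟨hΛ, hΛT, hderiv⟩, huniq⟩ := riccati_ODE_Lambda_wellposed_general hT.le ρ hKc hQc hbxc
    hσxc hb₁c hσ₁c hIc hNc hKpsd (fun t ht => posDef_of_posSemidef_sub_smul_one hδ (hN t ht).2)
    (by simpa only [conjTranspose_eq_transpose_of_trivial] using hQI) hPhat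
  simp only [lqRiccati, conjTranspose_eq_transpose_of_trivial] at hderiv huniq
  have hΛc : ContinuousOn Λ (Icc 0 T) := fun t ht => (hderiv t ht).continuousWithinAt
  exact ⟨Λ, ⟨hΛ, hΛc, isCompact_Icc.exists_bound_of_continuousOn hΛc, hΛT, hderiv⟩,
    fun Λ' hΛ' => huniq Λ' hΛ'.2.2.2.1 hΛ'.2.2.2.2⟩
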